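/- arXiv:1505.00708 — 3 statements merged into one kernel-verified Lean document; each statement's English description precedes it below -/
import Mathlib

section
/- Let ε₁ > 0, ε₂ > 0 and k ≥ 0, and let u, v, α, ϑ : ℝ × ℝ → ℝ be C² functions of (ξ, τ) satisfying, for all ξ ∈ [0,1] and all τ ∈ ℝ, the homogeneous (b = 0, s = 0) non-dimensional 1-D type III thermoelastic system: ∂_τ u = v, ∂_τ v = ∂_ξ(ε₁ ∂_ξ u − ϑ), ∂_τ α = ϑ, ∂_τ ϑ = ∂_ξ(∂_ξ α + k ∂_ξ ϑ) − ε₂ ∂_ξ v, together with the homogeneous Dirichlet boundary conditions u(0,τ) = u(1,τ) = 0 and α(0,τ) = α(1,τ) = 0 for all τ. Then the energy E(τ) = ∫₀¹ [ε₁ (∂_ξ u)² + v² + (1/ε₂)(∂_ξ α)² + (1/ε₂) ϑ²] dξ is differentiable in τ with deriv E τ = −(2k/ε₂) ∫₀¹ (∂_ξ ϑ(ξ,τ))² dξ ≤ 0 for every τ; in particular E is monotone nonincreasing. -/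
open intervalIntegral

/-!
Writing `e(ξ, τ)` for the energy density, the energy is differentiable in time with `E' = ∫₀¹ ∂_τ e`
(`hasDerivAt_integral_of_contDiff`). In the open interval the mixed second derivatives commute, so
`∂_τ ∂_ξ u = ∂_ξ v` and `∂_τ ∂_ξ α = ∂_ξ ϑ` (`deriv_deriv_comm`); inserting the equations of motion
gives the local energy balance
`∂_τ e = ∂_ξ W - (2k/ε₂) (∂_ξ ϑ)²`, with the energy flux
`W = 2 v (ε₁ ∂_ξ u - ϑ) + (2/ε₂) ϑ (∂_ξ α + k ∂_ξ ϑ)`.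
The Dirichlet conditions on `u` and `α`, differentiated in time, give `v = ϑ = 0` at both ends, so
`W` vanishes there and its derivative integrates to zero.
-/

/-- The partial derivative of a jointly `C¹` function in its first variable is the
Fréchet derivative applied to `(1, 0)`. -/
lemma hasDerivAt_fst_slice {f : ℝ → ℝ → ℝ} (hf : ContDiff ℝ 1 (Function.uncurry f)) (ξ τ : ℝ) :
    HasDerivAt (fun ξ' => f ξ' τ) (fderiv ℝ (Function.uncurry f) (ξ, τ) (1, 0)) ξ := by
  have h := ((hf.differentiable one_ne_zero) (ξ, τ)).hasFDerivAt
  exact h.comp_hasDerivAt (f := fun ξ' : ℝ => (ξ', τ)) ξ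
    ((hasDerivAt_id' ξ).prodMk (hasDerivAt_const ξ τ))

/-- The partial derivative of a jointly `C¹` function in its second variable is the
Fréchet derivative applied to `(0, 1)`. -/
lemma hasDerivAt_snd_slice {f : ℝ → ℝ → ℝ} (hf : ContDiff ℝ 1 (Function.uncurry f)) (ξ τ : ℝ) :
    HasDerivAt (fun τ' => f ξ τ') (fderiv ℝ (Function.uncurry f) (ξ, τ) (0, 1)) τ := by
  have h := ((hf.differentiable one_ne_zero) (ξ, τ)).hasFDerivAt
  exact h.comp_hasDerivAt (f := fun τ' : ℝ => (ξ, τ')) τ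
    ((hasDerivAt_const τ ξ).prodMk (hasDerivAt_id' τ))

lemma contDiff_deriv_fst {f : ℝ → ℝ → ℝ} (hf : ContDiff ℝ 2 (Function.uncurry f)) :
    ContDiff ℝ 1 (Function.uncurry fun ξ τ => deriv (fun ξ' => f ξ' τ) ξ) := by
  have h : (Function.uncurry fun ξ τ => deriv (fun ξ' => f ξ' τ) ξ)
      = fun p => fderiv ℝ (Function.uncurry f) p (1, 0) := by
    ext ⟨ξ, τ⟩
    exact (hasDerivAt_fst_slice (hf.of_le one_le_two) ξ τ).deriv
  rw [h]
  exact (hf.fderiv_right (m := 1) (by norm_num)).clm_apply contDiff_const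

lemma continuous_deriv_snd {f : ℝ → ℝ → ℝ} (hf : ContDiff ℝ 1 (Function.uncurry f)) :
    Continuous (Function.uncurry fun ξ τ => deriv (fun τ' => f ξ τ') τ) := by
  have h : (Function.uncurry fun ξ τ => deriv (fun τ' => f ξ τ') τ)
      = fun p => fderiv ℝ (Function.uncurry f) p (0, 1) := by
    ext ⟨ξ, τ⟩
    exact (hasDerivAt_snd_slice hf ξ τ).deriv
  rw [h]
  exact (hf.continuous_fderiv one_ne_zero).clm_apply continuous_const

/-- Schwarz's theorem: the mixed second partial derivatives of a `C²` function agree. -/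
lemma deriv_deriv_comm {f : ℝ → ℝ → ℝ} (hf : ContDiff ℝ 2 (Function.uncurry f)) (ξ τ : ℝ) :
    deriv (fun τ' => deriv (fun ξ' => f ξ' τ') ξ) τ
      = deriv (fun ξ' => deriv (fun τ' => f ξ' τ') τ) ξ := by
  have hf1 : ContDiff ℝ 1 (Function.uncurry f) := hf.of_le one_le_two
  have hd : ContDiff ℝ 1 (fderiv ℝ (Function.uncurry f)) := hf.fderiv_right (by norm_num)
  have hc : ∀ w : ℝ × ℝ, ContDiff ℝ 1
      (Function.uncurry fun ξ τ => fderiv ℝ (Function.uncurry f) (ξ, τ) w) := fun w =>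
    hd.clm_apply contDiff_const
  have hfd : ∀ w z : ℝ × ℝ, fderiv ℝ
      (Function.uncurry fun ξ τ => fderiv ℝ (Function.uncurry f) (ξ, τ) w) (ξ, τ) z
        = fderiv ℝ (fderiv ℝ (Function.uncurry f)) (ξ, τ) z w := by
    intro w z
    change fderiv ℝ (fun p => fderiv ℝ (Function.uncurry f) p w) (ξ, τ) z = _
    rw [fderiv_clm_apply (hd.differentiable one_ne_zero _) (differentiableAt_const _)]
    simp
  simp only [fun ξ τ => (hasDerivAt_fst_slice hf1 ξ τ).deriv,
    fun ξ τ => (hasDerivAt_snd_slice hf1 ξ τ).deriv]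
  rw [(hasDerivAt_snd_slice (hc (1, 0)) ξ τ).deriv, (hasDerivAt_fst_slice (hc (0, 1)) ξ τ).deriv,
    hfd, hfd]
  exact (hf.contDiffAt (x := (ξ, τ))).isSymmSndFDerivAt (by simp) (0, 1) (1, 0)

/-- Differentiation under the integral sign for a jointly `C¹` integrand on a compact interval:
the time derivative is bounded on `[0, 1] × [τ - 1, τ + 1]`, which dominates it locally. -/
lemma hasDerivAt_integral_of_contDiff {G : ℝ → ℝ → ℝ} (hG : ContDiff ℝ 1 (Function.uncurry G))
    (τ : ℝ) :
    HasDerivAt (fun τ' => ∫ ξ in (0:ℝ)..1, G ξ τ')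
      (∫ ξ in (0:ℝ)..1, deriv (fun τ' => G ξ τ') τ) τ := by
  have hc := continuous_deriv_snd hG
  have hslice : ∀ t, Continuous fun ξ => G ξ t := fun t =>
    hG.continuous.comp (continuous_id.prodMk continuous_const)
  have hslice' : Continuous fun ξ => deriv (fun τ' => G ξ τ') τ :=
    hc.comp (continuous_id.prodMk continuous_const)
  obtain ⟨C, hC⟩ := ((isCompact_Icc (a := (0:ℝ)) (b := 1)).prod
    (isCompact_Icc (a := τ - 1) (b := τ + 1))).exists_bound_of_continuousOn hc.continuousOn
  refine (intervalIntegral.hasDerivAt_integral_of_dominated_loc_of_deriv_le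
    (F := fun t ξ => G ξ t) (F' := fun t ξ => deriv (fun τ' => G ξ τ') t)
    (bound := fun _ => C) (Icc_mem_nhds (by linarith : τ - 1 < τ) (by linarith : τ < τ + 1))
    (Filter.Eventually.of_forall fun t => (hslice t).aestronglyMeasurable)
    ((hslice τ).intervalIntegrable _ _) hslice'.aestronglyMeasurable
    (Filter.Eventually.of_forall fun ξ hξ t ht => ?_) intervalIntegrable_const
    (Filter.Eventually.of_forall fun ξ _ t _ =>
      (hasDerivAt_snd_slice hG ξ t).differentiableAt.hasDerivAt)).2
  rw [Set.uIoc_of_le zero_le_one] at hξ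
  exact hC (ξ, t) ⟨Set.Ioc_subset_Icc_self hξ, ht⟩

/-- Energy dissipation for the homogeneous non-dimensional 1-D type III thermoelastic
system with homogeneous Dirichlet boundary conditions: the H¹-energy has derivative
`-(2k/ε₂) ∫₀¹ (∂_ξ ϑ)²` at every time, which is nonpositive, so the energy is
monotone nonincreasing. -/
theorem typeIII_energy_dissipation
    (ε₁ ε₂ k : ℝ) (hε₁ : 0 < ε₁) (hε₂ : 0 < ε₂) (hk : 0 ≤ k)
    (u v α ϑ : ℝ → ℝ → ℝ)
    (hu : ContDiff ℝ 2 (Function.uncurry u)) (hv : ContDiff ℝ 2 (Function.uncurry v))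
    (hα : ContDiff ℝ 2 (Function.uncurry α)) (hϑ : ContDiff ℝ 2 (Function.uncurry ϑ))
    (h1 : ∀ ξ ∈ Set.Icc (0:ℝ) 1, ∀ τ : ℝ, deriv (fun τ' => u ξ τ') τ = v ξ τ)
    (h2 : ∀ ξ ∈ Set.Icc (0:ℝ) 1, ∀ τ : ℝ,
      deriv (fun τ' => v ξ τ') τ
        = deriv (fun ξ' => ε₁ * deriv (fun ξ'' => u ξ'' τ) ξ' - ϑ ξ' τ) ξ)
    (h3 : ∀ ξ ∈ Set.Icc (0:ℝ) 1, ∀ τ : ℝ, deriv (fun τ' => α ξ τ') τ = ϑ ξ τ)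
    (h4 : ∀ ξ ∈ Set.Icc (0:ℝ) 1, ∀ τ : ℝ,
      deriv (fun τ' => ϑ ξ τ') τ
        = deriv (fun ξ' => deriv (fun ξ'' => α ξ'' τ) ξ'
            + k * deriv (fun ξ'' => ϑ ξ'' τ) ξ') ξ
          - ε₂ * deriv (fun ξ' => v ξ' τ) ξ)
    (hbcu : ∀ τ : ℝ, u 0 τ = 0 ∧ u 1 τ = 0)
    (hbcα : ∀ τ : ℝ, α 0 τ = 0 ∧ α 1 τ = 0)
    (E : ℝ → ℝ)
    (hE : E = fun τ => ∫ ξ in (0:ℝ)..1,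
      (ε₁ * (deriv (fun ξ' => u ξ' τ) ξ) ^ 2 + (v ξ τ) ^ 2
        + (1 / ε₂) * (deriv (fun ξ' => α ξ' τ) ξ) ^ 2
        + (1 / ε₂) * (ϑ ξ τ) ^ 2)) :
    (∀ τ : ℝ, HasDerivAt E
        (-(2 * k / ε₂) * ∫ ξ in (0:ℝ)..1, (deriv (fun ξ' => ϑ ξ' τ) ξ) ^ 2) τ) ∧
    (∀ τ : ℝ,
        -(2 * k / ε₂) * (∫ ξ in (0:ℝ)..1, (deriv (fun ξ' => ϑ ξ' τ) ξ) ^ 2) ≤ 0) ∧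
    Antitone E := by
  have one_le : (1 : WithTop ℕ∞) ≤ 2 := one_le_two
  have hux := contDiff_deriv_fst hu
  have hαx := contDiff_deriv_fst hα
  have hϑx := contDiff_deriv_fst hϑ
  have hv1 := hv.of_le one_le
  have hϑ1 := hϑ.of_le one_le
  have hderiv : ∀ τ : ℝ, HasDerivAt E
      (-(2 * k / ε₂) * ∫ ξ in (0:ℝ)..1, (deriv (fun ξ' => ϑ ξ' τ) ξ) ^ 2) τ := by
    intro τ
    -- Differentiating `∂_τ f = g` in `ξ` needs it on a neighbourhood of `ξ`, hence `ξ` interior.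
    have mixed : ∀ {f g : ℝ → ℝ → ℝ}, ContDiff ℝ 2 (Function.uncurry f) →
        (∀ ξ ∈ Set.Icc (0:ℝ) 1, ∀ τ : ℝ, deriv (fun τ' => f ξ τ') τ = g ξ τ) →
        ∀ ξ ∈ Set.Ioo (0:ℝ) 1, deriv (fun τ' => deriv (fun ξ' => f ξ' τ') ξ) τ
          = deriv (fun ξ' => g ξ' τ) ξ := by
      intro f g hf hfg ξ hξ
      rw [deriv_deriv_comm hf]
      apply Filter.EventuallyEq.deriv_eq
      filter_upwards [Icc_mem_nhds hξ.1 hξ.2] with x hx using hfg x hx τ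
    have bdry : ∀ {f g : ℝ → ℝ → ℝ} (ξ : ℝ), ξ ∈ Set.Icc (0:ℝ) 1 →
        (∀ ξ ∈ Set.Icc (0:ℝ) 1, ∀ τ : ℝ, deriv (fun τ' => f ξ τ') τ = g ξ τ) →
        (∀ τ, f ξ τ = 0) → g ξ τ = 0 := by
      intro f g ξ hξ hfg h0
      rw [← hfg ξ hξ τ]
      simp [h0]
    have v0 := bdry 0 (by simp) h1 fun t => (hbcu t).1
    have v1 := bdry 1 (by simp) h1 fun t => (hbcu t).2
    have ϑ0 := bdry 0 (by simp) h3 fun t => (hbcα t).1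
    have ϑ1 := bdry 1 (by simp) h3 fun t => (hbcα t).2
    have slice : ∀ {f : ℝ → ℝ → ℝ}, ContDiff ℝ 1 (Function.uncurry f) →
        ContDiff ℝ 1 fun ξ => f ξ τ := fun hf =>
      hf.comp (contDiff_id.prodMk contDiff_const)
    have sux := slice hux
    have sαx := slice hαx
    have sϑx := slice hϑx
    have sv := slice hv1
    have sϑ := slice hϑ1
    have d {f : ℝ → ℝ} (hf : ContDiff ℝ 1 f) (ξ : ℝ) : HasDerivAt f (deriv f ξ) ξ :=
      (hf.differentiable one_ne_zero ξ).hasDerivAt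
    -- The energy flux.
    let W : ℝ → ℝ := fun ξ => 2 * v ξ τ * (ε₁ * deriv (fun ξ' => u ξ' τ) ξ - ϑ ξ τ)
      + (2 / ε₂) * ϑ ξ τ * (deriv (fun ξ' => α ξ' τ) ξ + k * deriv (fun ξ' => ϑ ξ' τ) ξ)
    have hW : ContDiff ℝ 1 W := by fun_prop
    have hWint : ∫ ξ in (0:ℝ)..1, deriv W ξ = 0 := by
      rw [intervalIntegral.integral_eq_sub_of_hasDerivAt (fun ξ _ => d hW ξ)
        ((hW.continuous_deriv le_rfl).intervalIntegrable _ _)]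
      simp [W, v0, v1, ϑ0, ϑ1]
    have hG : ContDiff ℝ 1 (Function.uncurry fun ξ τ =>
        ε₁ * (deriv (fun ξ' => u ξ' τ) ξ) ^ 2 + (v ξ τ) ^ 2
        + (1 / ε₂) * (deriv (fun ξ' => α ξ' τ) ξ) ^ 2 + (1 / ε₂) * (ϑ ξ τ) ^ 2) :=
      (((contDiff_const.mul (hux.pow 2)).add (hv1.pow 2)).add
        (contDiff_const.mul (hαx.pow 2))).add (contDiff_const.mul (hϑ1.pow 2))
    have key := hasDerivAt_integral_of_contDiff hG τ
    rw [hE]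
    convert key using 1
    rw [← intervalIntegral.integral_const_mul]
    have hsq : Continuous fun ξ => -(2 * k / ε₂) * (deriv (fun ξ' => ϑ ξ' τ) ξ) ^ 2 :=
      continuous_const.mul (sϑx.continuous.pow 2)
    have hsplit : ∫ ξ in (0:ℝ)..1, -(2 * k / ε₂) * (deriv (fun ξ' => ϑ ξ' τ) ξ) ^ 2
        = ∫ ξ in (0:ℝ)..1,
          (deriv W ξ + -(2 * k / ε₂) * (deriv (fun ξ' => ϑ ξ' τ) ξ) ^ 2) := by
      rw [intervalIntegral.integral_add ((hW.continuous_deriv le_rfl).intervalIntegrable _ _)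
        (hsq.intervalIntegrable _ _), hWint, zero_add]
    rw [hsplit]
    -- The local energy balance, needed only off the endpoints.
    refine intervalIntegral.integral_congr_Ioo_of_le zero_le_one fun ξ hξ => ?_
    have hξ' := Set.Ioo_subset_Icc_self hξ
    have dt {f : ℝ → ℝ → ℝ} (hf : ContDiff ℝ 1 (Function.uncurry f)) :
        HasDerivAt (fun τ' => f ξ τ') (deriv (fun τ' => f ξ τ') τ) τ :=
      (hasDerivAt_snd_slice hf ξ τ).differentiableAt.hasDerivAt
    have eG := ((((((dt hux).pow 2).const_mul ε₁).add ((dt hv1).pow 2)).add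
      (((dt hαx).pow 2).const_mul (1 / ε₂))).add (((dt hϑ1).pow 2).const_mul (1 / ε₂))).deriv
    have eW := ((((d sv ξ).const_mul 2).mul (((d sux ξ).const_mul ε₁).sub (d sϑ ξ))).add
      (((d sϑ ξ).const_mul (2 / ε₂)).mul ((d sαx ξ).add ((d sϑx ξ).const_mul k)))).deriv
    have e2 := h2 ξ hξ' τ
    have e4 := h4 ξ hξ' τ
    have e2' := (((d sux ξ).const_mul ε₁).sub (d sϑ ξ)).deriv
    have e4' := ((d sαx ξ).add ((d sϑx ξ).const_mul k)).deriv
    have m1 := mixed hu h1 ξ hξ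
    have m3 := mixed hα h3 ξ hξ
    refine (congrArg (· + _) eW).trans (Eq.trans ?_ eG.symm)
    replace e2 := e2.trans e2'
    replace e4 := e4.trans (congrArg (· - _) e4')
    simp only [m1, m3, e2, e4, Pi.sub_apply, Pi.add_apply]
    field_simp
    ring
  have hnonpos : ∀ τ : ℝ,
      -(2 * k / ε₂) * (∫ ξ in (0:ℝ)..1, (deriv (fun ξ' => ϑ ξ' τ) ξ) ^ 2) ≤ 0 := fun τ =>
    mul_nonpos_of_nonpos_of_nonneg (neg_nonpos.2 (by positivity))
      (intervalIntegral.integral_nonneg zero_le_one fun ξ _ => sq_nonneg _)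
  exact ⟨hderiv, hnonpos, antitone_of_hasDerivAt_nonpos hderiv hnonpos⟩
end

section
/- Let ε₁ > 0 and ε₂ > 0, and let u, v, α, ϑ : ℝ × ℝ → ℝ be C² functions of (ξ, τ) satisfying, for all ξ ∈ [0,1] and all τ ∈ ℝ, the homogeneous non-dimensional 1-D type II thermoelastic system (the type III system with k = 0 and b = s = 0): ∂_τ u = v, ∂_τ v = ∂_ξ(ε₁ ∂_ξ u − ϑ), ∂_τ α = ϑ, ∂_τ ϑ = ∂_ξ ∂_ξ α − ε₂ ∂_ξ v, together with the homogeneous Dirichlet boundary conditions u(0,τ) = u(1,τ) = 0 and α(0,τ) = α(1,τ) = 0 for all τ. Then the energy E(τ) = ∫₀¹ [ε₁ (∂_ξ u)² + v² + (1/ε₂)(∂_ξ α)² + (1/ε₂) ϑ²] dξ is exactly conserved: E(τ₁) = E(τ₂) for all τ₁, τ₂ ∈ ℝ. -/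
/-!
The identity is a local conservation law: on the open strip `0 < ξ < 1` the energy density
`e = ε₁ u_ξ² + v² + (α_ξ² + ϑ²) / ε₂` satisfies `∂_τ e = ∂_ξ q` with flux
`q = 2 (ε₁ u_ξ v - ϑ v + α_ξ ϑ / ε₂)`. This uses the four equations and the symmetry of second
derivatives, which turns `∂_τ ∂_ξ u` into `∂_ξ v` and `∂_τ ∂_ξ α` into `∂_ξ ϑ`. The Dirichlet
conditions hold for all times, so `v = ∂_τ u` and `ϑ = ∂_τ α` vanish at `ξ = 0, 1`, and so does `q`.
Integrating over the rectangle `[0,1] × [τ₁, τ₂]` and using Fubini (`integral_eq_of_conservation_law`)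
gives the claim.
-/

open intervalIntegral

lemma hasDerivAt_slice_fst {f : ℝ × ℝ → ℝ} (hf : ContDiff ℝ 1 f) (x t : ℝ) :
    HasDerivAt (fun x' => f (x', t)) (fderiv ℝ f (x, t) (1, 0)) x :=
  ((hf.differentiable one_ne_zero) (x, t)).hasFDerivAt.comp_hasDerivAt x
    ((hasDerivAt_id x).prodMk (hasDerivAt_const x t))

lemma hasDerivAt_slice_snd {f : ℝ × ℝ → ℝ} (hf : ContDiff ℝ 1 f) (x t : ℝ) :
    HasDerivAt (fun t' => f (x, t')) (fderiv ℝ f (x, t) (0, 1)) t :=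
  ((hf.differentiable one_ne_zero) (x, t)).hasFDerivAt.comp_hasDerivAt t
    ((hasDerivAt_const t x).prodMk (hasDerivAt_id t))

lemma contDiff_fderiv_apply {f : ℝ × ℝ → ℝ} (hf : ContDiff ℝ 2 f) (w : ℝ × ℝ) :
    ContDiff ℝ 1 (fun p => fderiv ℝ f p w) :=
  (hf.fderiv_right (m := 1) (by norm_num)).clm_apply contDiff_const

lemma fderiv_fderiv_swap {f : ℝ × ℝ → ℝ} (hf : ContDiff ℝ 2 f) (p a b : ℝ × ℝ) :
    fderiv ℝ (fun p' => fderiv ℝ f p' a) p b = fderiv ℝ (fun p' => fderiv ℝ f p' b) p a := by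
  have hd : DifferentiableAt ℝ (fderiv ℝ f) p :=
    (hf.fderiv_right (m := 1) (by norm_num)).differentiable one_ne_zero p
  have key (c d : ℝ × ℝ) :
      fderiv ℝ (fun p' => fderiv ℝ f p' c) p d = fderiv ℝ (fderiv ℝ f) p d c := by
    rw [fderiv_clm_apply hd (differentiableAt_const c)]
    simp
  rw [key, key]
  exact (hf.contDiffAt.isSymmSndFDerivAt (by simp)).eq b a

/-- If `∂_τ f = g` on the strip `0 ≤ ξ ≤ 1`, then `∂_τ ∂_ξ f = ∂_ξ g` in its interior. -/
lemma fderiv_mixed_of_eq {f g : ℝ × ℝ → ℝ} (hf : ContDiff ℝ 2 f)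
    (h : ∀ ξ ∈ Set.Icc (0:ℝ) 1, ∀ τ : ℝ, fderiv ℝ f (ξ, τ) (0, 1) = g (ξ, τ))
    {x : ℝ} (hx : x ∈ Set.Ioo (0:ℝ) 1) (t : ℝ) :
    fderiv ℝ (fun p => fderiv ℝ f p (1, 0)) (x, t) (0, 1) = fderiv ℝ g (x, t) (1, 0) := by
  rw [fderiv_fderiv_swap hf]
  have hev : (fun p => fderiv ℝ f p (0, 1)) =ᶠ[nhds (x, t)] g := by
    have hnhds : Set.Ioo (0:ℝ) 1 ×ˢ (Set.univ : Set ℝ) ∈ nhds (x, t) :=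
      prod_mem_nhds (Ioo_mem_nhds hx.1 hx.2) Filter.univ_mem
    filter_upwards [hnhds] with p hp
    exact h p.1 (Set.Ioo_subset_Icc_self hp.1) p.2
  rw [hev.fderiv_eq]

/-- A density `e` with `∂_τ e = ∂_ξ q` on `0 < ξ < 1`, whose flux `q` takes equal values at the two
ends, has constant integral over `[0,1]`. -/
lemma integral_eq_of_conservation_law {e q : ℝ × ℝ → ℝ} (he : ContDiff ℝ 1 e)
    (hq : ContDiff ℝ 1 q)
    (hlaw : ∀ x ∈ Set.Ioo (0:ℝ) 1, ∀ t, fderiv ℝ e (x, t) (0, 1) = fderiv ℝ q (x, t) (1, 0))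
    (hbc : ∀ t, q (0, t) = q (1, t)) (τ₁ τ₂ : ℝ) :
    ∫ x in (0:ℝ)..1, e (x, τ₁) = ∫ x in (0:ℝ)..1, e (x, τ₂) := by
  have hce : Continuous (fun p : ℝ × ℝ => fderiv ℝ e p (0, 1)) :=
    (he.continuous_fderiv one_ne_zero).clm_apply continuous_const
  have hcq : Continuous (fun p : ℝ × ℝ => fderiv ℝ q p (1, 0)) :=
    (hq.continuous_fderiv one_ne_zero).clm_apply continuous_const
  have hslice (t : ℝ) : IntervalIntegrable (fun x => e (x, t)) MeasureTheory.volume 0 1 :=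
    (he.continuous.comp (by fun_prop : Continuous fun x : ℝ => (x, t))).intervalIntegrable 0 1
  have htime (x : ℝ) :
      ∫ t in τ₁..τ₂, fderiv ℝ e (x, t) (0, 1) = e (x, τ₂) - e (x, τ₁) :=
    integral_eq_sub_of_hasDerivAt (fun t _ => hasDerivAt_slice_snd he x t)
      ((hce.comp (by fun_prop : Continuous fun t : ℝ => (x, t))).intervalIntegrable _ _)
  have hspace (t : ℝ) : ∫ x in (0:ℝ)..1, fderiv ℝ e (x, t) (0, 1) = 0 := by
    have hcongr : ∫ x in (0:ℝ)..1, fderiv ℝ e (x, t) (0, 1)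
        = ∫ x in (0:ℝ)..1, fderiv ℝ q (x, t) (1, 0) := by
      rw [integral_of_le zero_le_one, integral_of_le zero_le_one,
        MeasureTheory.integral_Ioc_eq_integral_Ioo, MeasureTheory.integral_Ioc_eq_integral_Ioo]
      exact MeasureTheory.setIntegral_congr_fun measurableSet_Ioo fun x hx => hlaw x hx t
    rw [hcongr, integral_eq_sub_of_hasDerivAt (fun x _ => hasDerivAt_slice_fst hq x t)
      ((hcq.comp (by fun_prop : Continuous fun x : ℝ => (x, t))).intervalIntegrable _ _),
      hbc t, sub_self]
  have hswap := MeasureTheory.intervalIntegral_intervalIntegral_swap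
    (F := fun x t => fderiv ℝ e (x, t) (0, 1)) (a := 0) (b := 1) (c := τ₁) (d := τ₂)
    (((hce.continuousOn.integrableOn_compact
      (isCompact_uIcc.prod isCompact_uIcc)).mono_set
        (Set.prod_mono Set.uIoc_subset_uIcc Set.uIoc_subset_uIcc)))
  simp only [htime, hspace, intervalIntegral.integral_zero] at hswap
  rw [integral_sub (hslice τ₂) (hslice τ₁)] at hswap
  linarith

/-- Exact energy conservation for the homogeneous non-dimensional 1-D type II
thermoelastic system (type III with `k = 0`, no sources) with homogeneous Dirichlet
boundary conditions: the H¹-energy is constant in time. -/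
theorem typeII_energy_conservation
    (ε₁ ε₂ : ℝ) (hε₁ : 0 < ε₁) (hε₂ : 0 < ε₂)
    (u v α ϑ : ℝ → ℝ → ℝ)
    (hu : ContDiff ℝ 2 (Function.uncurry u)) (hv : ContDiff ℝ 2 (Function.uncurry v))
    (hα : ContDiff ℝ 2 (Function.uncurry α)) (hϑ : ContDiff ℝ 2 (Function.uncurry ϑ))
    (h1 : ∀ ξ ∈ Set.Icc (0:ℝ) 1, ∀ τ : ℝ, deriv (fun τ' => u ξ τ') τ = v ξ τ)
    (h2 : ∀ ξ ∈ Set.Icc (0:ℝ) 1, ∀ τ : ℝ,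
      deriv (fun τ' => v ξ τ') τ
        = deriv (fun ξ' => ε₁ * deriv (fun ξ'' => u ξ'' τ) ξ' - ϑ ξ' τ) ξ)
    (h3 : ∀ ξ ∈ Set.Icc (0:ℝ) 1, ∀ τ : ℝ, deriv (fun τ' => α ξ τ') τ = ϑ ξ τ)
    (h4 : ∀ ξ ∈ Set.Icc (0:ℝ) 1, ∀ τ : ℝ,
      deriv (fun τ' => ϑ ξ τ') τ
        = deriv (fun ξ' => deriv (fun ξ'' => α ξ'' τ) ξ') ξ
          - ε₂ * deriv (fun ξ' => v ξ' τ) ξ)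
    (hbcu : ∀ τ : ℝ, u 0 τ = 0 ∧ u 1 τ = 0)
    (hbcα : ∀ τ : ℝ, α 0 τ = 0 ∧ α 1 τ = 0)
    (E : ℝ → ℝ)
    (hE : E = fun τ => ∫ ξ in (0:ℝ)..1,
      (ε₁ * (deriv (fun ξ' => u ξ' τ) ξ) ^ 2 + (v ξ τ) ^ 2
        + (1 / ε₂) * (deriv (fun ξ' => α ξ' τ) ξ) ^ 2
        + (1 / ε₂) * (ϑ ξ τ) ^ 2)) :
    ∀ τ₁ τ₂ : ℝ, E τ₁ = E τ₂ := by
  intro τ₁ τ₂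
  have hu1 := hu.of_le (m := 1) (by norm_num)
  have hv1 := hv.of_le (m := 1) (by norm_num)
  have hα1 := hα.of_le (m := 1) (by norm_num)
  have hϑ1 := hϑ.of_le (m := 1) (by norm_num)
  have hux := contDiff_fderiv_apply hu (1, 0)
  have hαx := contDiff_fderiv_apply hα (1, 0)
  have dux (x t : ℝ) : deriv (fun ξ' => u ξ' t) x = fderiv ℝ (Function.uncurry u) (x, t) (1, 0) :=
    (hasDerivAt_slice_fst hu1 x t).deriv
  have dαx (x t : ℝ) : deriv (fun ξ' => α ξ' t) x = fderiv ℝ (Function.uncurry α) (x, t) (1, 0) :=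
    (hasDerivAt_slice_fst hα1 x t).deriv
  have e1 : ∀ ξ ∈ Set.Icc (0:ℝ) 1, ∀ τ : ℝ,
      fderiv ℝ (Function.uncurry u) (ξ, τ) (0, 1) = Function.uncurry v (ξ, τ) := fun ξ hξ τ =>
    (hasDerivAt_slice_snd hu1 ξ τ).deriv.symm.trans (h1 ξ hξ τ)
  have e3 : ∀ ξ ∈ Set.Icc (0:ℝ) 1, ∀ τ : ℝ,
      fderiv ℝ (Function.uncurry α) (ξ, τ) (0, 1) = Function.uncurry ϑ (ξ, τ) := fun ξ hξ τ =>
    (hasDerivAt_slice_snd hα1 ξ τ).deriv.symm.trans (h3 ξ hξ τ)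
  have e2 : ∀ ξ ∈ Set.Icc (0:ℝ) 1, ∀ τ : ℝ, fderiv ℝ (Function.uncurry v) (ξ, τ) (0, 1)
      = ε₁ * fderiv ℝ (fun p => fderiv ℝ (Function.uncurry u) p (1, 0)) (ξ, τ) (1, 0)
        - fderiv ℝ (Function.uncurry ϑ) (ξ, τ) (1, 0) := by
    intro ξ hξ τ
    have h := h2 ξ hξ τ
    simp only [dux] at h
    exact (hasDerivAt_slice_snd hv1 ξ τ).deriv.symm.trans (h.trans
      (((hasDerivAt_slice_fst hux ξ τ).const_mul ε₁).sub (hasDerivAt_slice_fst hϑ1 ξ τ)).deriv)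
  have e4 : ∀ ξ ∈ Set.Icc (0:ℝ) 1, ∀ τ : ℝ, fderiv ℝ (Function.uncurry ϑ) (ξ, τ) (0, 1)
      = fderiv ℝ (fun p => fderiv ℝ (Function.uncurry α) p (1, 0)) (ξ, τ) (1, 0)
        - ε₂ * fderiv ℝ (Function.uncurry v) (ξ, τ) (1, 0) := by
    intro ξ hξ τ
    have h := h4 ξ hξ τ
    simp only [dαx] at h
    rw [(hasDerivAt_slice_fst hαx ξ τ).deriv,
      show deriv (fun ξ' => v ξ' τ) ξ = _ from (hasDerivAt_slice_fst hv1 ξ τ).deriv] at h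
    exact (hasDerivAt_slice_snd hϑ1 ξ τ).deriv.symm.trans h
  -- Differentiating the Dirichlet conditions in time.
  have hv0 (x : ℝ) (hx : x ∈ Set.Icc (0:ℝ) 1) (hz : ∀ τ, u x τ = 0) (t : ℝ) :
      Function.uncurry v (x, t) = 0 := by
    have h := h1 x hx t
    simp only [hz, deriv_const] at h
    exact h.symm
  have hϑ0 (x : ℝ) (hx : x ∈ Set.Icc (0:ℝ) 1) (hz : ∀ τ, α x τ = 0) (t : ℝ) :
      Function.uncurry ϑ (x, t) = 0 := by
    have h := h3 x hx t
    simp only [hz, deriv_const] at h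
    exact h.symm
  have he : ContDiff ℝ 1 (fun p : ℝ × ℝ =>
      ε₁ * (fderiv ℝ (Function.uncurry u) p (1, 0)) ^ 2 + (Function.uncurry v p) ^ 2
        + (1 / ε₂) * (fderiv ℝ (Function.uncurry α) p (1, 0)) ^ 2
        + (1 / ε₂) * (Function.uncurry ϑ p) ^ 2) :=
    (((contDiff_const.mul (hux.pow 2)).add (hv1.pow 2)).add
      (contDiff_const.mul (hαx.pow 2))).add (contDiff_const.mul (hϑ1.pow 2))
  have hq : ContDiff ℝ 1 (fun p : ℝ × ℝ =>
      2 * (ε₁ * (fderiv ℝ (Function.uncurry u) p (1, 0) * Function.uncurry v p)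
        - Function.uncurry ϑ p * Function.uncurry v p
        + (1 / ε₂) * (fderiv ℝ (Function.uncurry α) p (1, 0) * Function.uncurry ϑ p))) :=
    contDiff_const.mul (((contDiff_const.mul (hux.mul hv1)).sub (hϑ1.mul hv1)).add
      (contDiff_const.mul (hαx.mul hϑ1)))
  have hmain := integral_eq_of_conservation_law he hq ?_ ?_ τ₁ τ₂
  · simp only [hE, dux, dαx]
    exact hmain
  · intro x hx t
    have hx' := Set.Ioo_subset_Icc_self hx
    have De := ((((hasDerivAt_slice_snd hux x t).pow 2).const_mul ε₁).add
      ((hasDerivAt_slice_snd hv1 x t).pow 2)).add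
      (((hasDerivAt_slice_snd hαx x t).pow 2).const_mul (1 / ε₂)) |>.add
      (((hasDerivAt_slice_snd hϑ1 x t).pow 2).const_mul (1 / ε₂))
    have Dq := (((((hasDerivAt_slice_fst hux x t).mul (hasDerivAt_slice_fst hv1 x t)).const_mul
      ε₁).sub ((hasDerivAt_slice_fst hϑ1 x t).mul (hasDerivAt_slice_fst hv1 x t))).add
      (((hasDerivAt_slice_fst hαx x t).mul (hasDerivAt_slice_fst hϑ1 x t)).const_mul
      (1 / ε₂))).const_mul 2
    refine ((hasDerivAt_slice_snd he x t).unique De).trans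
      (Eq.trans ?_ ((hasDerivAt_slice_fst hq x t).unique Dq).symm)
    rw [fderiv_mixed_of_eq hu e1 hx, fderiv_mixed_of_eq hα e3 hx, e2 x hx' t, e4 x hx' t]
    have hne : ε₂ ≠ 0 := hε₂.ne'
    field_simp
    ring
  · intro t
    have m0 : (0:ℝ) ∈ Set.Icc (0:ℝ) 1 := by simp
    have m1 : (1:ℝ) ∈ Set.Icc (0:ℝ) 1 := by simp
    simp only [hv0 0 m0 (fun τ => (hbcu τ).1), hv0 1 m1 (fun τ => (hbcu τ).2),
      hϑ0 0 m0 (fun τ => (hbcα τ).1), hϑ0 1 m1 (fun τ => (hbcα τ).2), mul_zero]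
end

section
/- Let ρ > 0, c > 0, k₂ > 0 and k₃ ≥ 0, and let α, ϑ : ℝ × ℝ → ℝ be C² functions of (ξ, t) satisfying, for all ξ ∈ [0,1] and all t ∈ ℝ, the 1-D thermal sub-problem of the operator split (non-classical heat conduction at fixed configuration): ∂_t α = ϑ and ρc ∂_t ϑ = ∂_ξ(k₂ ∂_ξ α + k₃ ∂_ξ ϑ), with the homogeneous Dirichlet boundary condition α(0,t) = α(1,t) = 0 for all t. Then the thermal energy E_T(t) = ∫₀¹ [k₂ (∂_ξ α)² + ρc ϑ²] dξ is differentiable with deriv E_T t = −2k₃ ∫₀¹ (∂_ξ ϑ(ξ,t))² dξ ≤ 0 for every t; in particular the thermal sub-problem is dissipative, and when k₃ = 0 it conserves E_T exactly. -/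
open intervalIntegral

/-!
The proof is the energy method. Since the integrand of the energy is `C¹` in `(ξ, t)`, the time
derivative passes under the integral (`hasDerivAt_integral_param`) and gives
`2 ∫ (k₂ ∂_ξ α · ∂_t ∂_ξ α + ρ c ϑ · ∂_t ϑ)`. The mixed partials of `α` commute (`deriv_mixed`), so
`∂_t ∂_ξ α = ∂_ξ ϑ` inside the interval. With the flux `q = k₂ ∂_ξ α + k₃ ∂_ξ ϑ` and the heat equation
`ρ c ∂_t ϑ = ∂_ξ q`, the integrand equals `2 ∂_ξ (ϑ q) - 2 k₃ (∂_ξ ϑ)²`. The total derivative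
integrates to zero, because differentiating the boundary condition in time gives `ϑ = 0` at
`ξ = 0` and `ξ = 1`.
-/

lemma hasDerivAt_slice_left {f : ℝ → ℝ → ℝ} (hf : Differentiable ℝ (Function.uncurry f))
    (x t : ℝ) :
    HasDerivAt (fun x' => f x' t) (fderiv ℝ (Function.uncurry f) (x, t) (1, 0)) x :=
  (hf (x, t)).hasFDerivAt.comp_hasDerivAt (f := fun x' : ℝ => (x', t)) x
    ((hasDerivAt_id x).prodMk (hasDerivAt_const x t))

lemma hasDerivAt_slice_right {f : ℝ → ℝ → ℝ} (hf : Differentiable ℝ (Function.uncurry f))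
    (x t : ℝ) :
    HasDerivAt (fun t' => f x t') (fderiv ℝ (Function.uncurry f) (x, t) (0, 1)) t :=
  (hf (x, t)).hasFDerivAt.comp_hasDerivAt (f := fun t' : ℝ => (x, t')) t
    ((hasDerivAt_const t x).prodMk (hasDerivAt_id t))

lemma contDiff_deriv_left {f : ℝ → ℝ → ℝ} (hf : ContDiff ℝ 2 (Function.uncurry f)) :
    ContDiff ℝ 1 (Function.uncurry fun x t => deriv (fun x' => f x' t) x) := by
  have h : (Function.uncurry fun x t => deriv (fun x' => f x' t) x)
      = fun p : ℝ × ℝ => fderiv ℝ (Function.uncurry f) p (1, 0) := by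
    funext ⟨x, t⟩
    exact (hasDerivAt_slice_left (hf.differentiable (by norm_num)) x t).deriv
  rw [h]
  exact (hf.fderiv_right (m := 1) (by norm_num)).clm_apply contDiff_const

lemma continuous_deriv_right {f : ℝ → ℝ → ℝ} (hf : ContDiff ℝ 1 (Function.uncurry f)) :
    Continuous (Function.uncurry fun x t => deriv (fun t' => f x t') t) := by
  have h : (Function.uncurry fun x t => deriv (fun t' => f x t') t)
      = fun p : ℝ × ℝ => fderiv ℝ (Function.uncurry f) p (0, 1) := by
    funext ⟨x, t⟩
    exact (hasDerivAt_slice_right (hf.differentiable (by norm_num)) x t).deriv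
  rw [h]
  exact (hf.continuous_fderiv (by norm_num)).clm_apply continuous_const

/-- Symmetry of second derivatives, for iterated derivatives of slices. -/
lemma deriv_mixed {f : ℝ → ℝ → ℝ} (hf : ContDiff ℝ 2 (Function.uncurry f)) (x t : ℝ) :
    deriv (fun t' => deriv (fun x' => f x' t') x) t
      = deriv (fun x' => deriv (fun t' => f x' t') t) x := by
  have hd : Differentiable ℝ (Function.uncurry f) := hf.differentiable (by norm_num)
  have hd2 : Differentiable ℝ (fderiv ℝ (Function.uncurry f)) :=
    (hf.fderiv_right (m := 1) (by norm_num)).differentiable (by norm_num)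
  have hl : (fun t' => deriv (fun x' => f x' t') x)
      = fun t' => fderiv ℝ (Function.uncurry f) (x, t') (1, 0) :=
    funext fun t' => (hasDerivAt_slice_left hd x t').deriv
  have hr : (fun x' => deriv (fun t' => f x' t') t)
      = fun x' => fderiv ℝ (Function.uncurry f) (x', t) (0, 1) :=
    funext fun x' => (hasDerivAt_slice_right hd x' t).deriv
  have h1 : HasDerivAt (fun t' => fderiv ℝ (Function.uncurry f) (x, t'))
      (fderiv ℝ (fderiv ℝ (Function.uncurry f)) (x, t) (0, 1)) t :=
    (hd2 (x, t)).hasFDerivAt.comp_hasDerivAt (f := fun t' : ℝ => (x, t')) t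
      ((hasDerivAt_const t x).prodMk (hasDerivAt_id t))
  have h2 : HasDerivAt (fun x' => fderiv ℝ (Function.uncurry f) (x', t))
      (fderiv ℝ (fderiv ℝ (Function.uncurry f)) (x, t) (1, 0)) x :=
    (hd2 (x, t)).hasFDerivAt.comp_hasDerivAt (f := fun x' : ℝ => (x', t)) x
      ((hasDerivAt_id x).prodMk (hasDerivAt_const x t))
  have h1' := h1.clm_apply (hasDerivAt_const t ((1, 0) : ℝ × ℝ))
  have h2' := h2.clm_apply (hasDerivAt_const x ((0, 1) : ℝ × ℝ))
  rw [hl, hr, h1'.deriv, h2'.deriv]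
  have hsymm : IsSymmSndFDerivAt ℝ (Function.uncurry f) (x, t) :=
    hf.contDiffAt.isSymmSndFDerivAt (by simp)
  simpa using hsymm.eq (0, 1) (1, 0)

/-- Differentiation under the integral sign for a `C¹` integrand; the dominating function is the
maximum of the time derivative over the compact rectangle `[0, 1] × [t - 1, t + 1]`. -/
lemma hasDerivAt_integral_param {g : ℝ → ℝ → ℝ} (hg : ContDiff ℝ 1 (Function.uncurry g))
    (t : ℝ) :
    HasDerivAt (fun s => ∫ x in (0:ℝ)..1, g x s)
      (∫ x in (0:ℝ)..1, deriv (fun s => g x s) t) t := by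
  have hcg : Continuous (Function.uncurry g) := hg.continuous
  have hc := continuous_deriv_right hg
  have hslice : ∀ s, Continuous fun x => g x s := fun s =>
    hcg.comp (continuous_id.prodMk continuous_const)
  have hslice' : Continuous fun x => deriv (fun s => g x s) t :=
    hc.comp (continuous_id.prodMk continuous_const)
  obtain ⟨C, hC⟩ := ((isCompact_Icc (a := (0:ℝ)) (b := 1)).prod
    (isCompact_Icc (a := t - 1) (b := t + 1))).exists_bound_of_continuousOn hc.continuousOn
  refine (hasDerivAt_integral_of_dominated_loc_of_deriv_le
    (F := fun s x => g x s) (F' := fun s x => deriv (fun s' => g x s') s) (bound := fun _ => C)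
    (Icc_mem_nhds (show t - 1 < t by linarith) (show t < t + 1 by linarith))
    (Filter.Eventually.of_forall fun s => (hslice s).aestronglyMeasurable)
    ((hslice t).intervalIntegrable _ _) hslice'.aestronglyMeasurable
    (Filter.Eventually.of_forall fun x hx s hs => ?_) intervalIntegrable_const
    (Filter.Eventually.of_forall fun x hx s hs => ?_)).2
  · rw [Set.uIoc_of_le zero_le_one] at hx
    exact hC (x, s) ⟨⟨hx.1.le, hx.2⟩, hs⟩
  · exact (hasDerivAt_slice_right (hg.differentiable (by norm_num)) x s).differentiableAt.hasDerivAt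

/-- The 1-D thermal sub-problem of the operator split (non-classical heat conduction at
fixed configuration) is dissipative: the thermal energy has derivative
`-2k₃ ∫₀¹ (∂_ξ ϑ)² ≤ 0`, and it is exactly conserved when `k₃ = 0`. -/
theorem thermal_subproblem_dissipative
    (ρ c k₂ k₃ : ℝ) (hρ : 0 < ρ) (hc : 0 < c) (hk₂ : 0 < k₂) (hk₃ : 0 ≤ k₃)
    (α ϑ : ℝ → ℝ → ℝ)
    (hα : ContDiff ℝ 2 (Function.uncurry α)) (hϑ : ContDiff ℝ 2 (Function.uncurry ϑ))
    (h1 : ∀ ξ ∈ Set.Icc (0:ℝ) 1, ∀ t : ℝ, deriv (fun t' => α ξ t') t = ϑ ξ t)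
    (h2 : ∀ ξ ∈ Set.Icc (0:ℝ) 1, ∀ t : ℝ,
      ρ * c * deriv (fun t' => ϑ ξ t') t
        = deriv (fun ξ' => k₂ * deriv (fun ξ'' => α ξ'' t) ξ'
            + k₃ * deriv (fun ξ'' => ϑ ξ'' t) ξ') ξ)
    (hbc : ∀ t : ℝ, α 0 t = 0 ∧ α 1 t = 0)
    (E : ℝ → ℝ)
    (hE : E = fun t => ∫ ξ in (0:ℝ)..1,
      (k₂ * (deriv (fun ξ' => α ξ' t) ξ) ^ 2 + ρ * c * (ϑ ξ t) ^ 2)) :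
    (∀ t : ℝ, HasDerivAt E
        (-2 * k₃ * ∫ ξ in (0:ℝ)..1, (deriv (fun ξ' => ϑ ξ' t) ξ) ^ 2) t) ∧
    (∀ t : ℝ, -2 * k₃ * (∫ ξ in (0:ℝ)..1, (deriv (fun ξ' => ϑ ξ' t) ξ) ^ 2) ≤ 0) ∧
    (k₃ = 0 → ∀ t₁ t₂ : ℝ, E t₁ = E t₂) := by
  have hder : ∀ t : ℝ, HasDerivAt E
      (-2 * k₃ * ∫ ξ in (0:ℝ)..1, (deriv (fun ξ' => ϑ ξ' t) ξ) ^ 2) t := by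
    intro t
    have hαx := contDiff_deriv_left hα
    have hϑx := contDiff_deriv_left hϑ
    have hϑ1 : ContDiff ℝ 1 (Function.uncurry ϑ) := hϑ.of_le (by norm_num)
    have hg : ContDiff ℝ 1 (Function.uncurry fun ξ t =>
        k₂ * (deriv (fun ξ' => α ξ' t) ξ) ^ 2 + ρ * c * (ϑ ξ t) ^ 2) :=
      (contDiff_const.mul (hαx.pow 2)).add (contDiff_const.mul (hϑ1.pow 2))
    have hE' := hasDerivAt_integral_param hg t
    rw [hE]
    convert hE' using 1
    -- The heat flux, so that the heat equation reads `ρ c ∂_t ϑ = ∂_ξ q`.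
    set q : ℝ → ℝ → ℝ := fun ξ t => k₂ * deriv (fun ξ'' => α ξ'' t) ξ
            + k₃ * deriv (fun ξ'' => ϑ ξ'' t) ξ with hq
    have hq1 : ContDiff ℝ 1 (Function.uncurry q) :=
      (contDiff_const.mul hαx).add (contDiff_const.mul hϑx)
    have hP1 : ContDiff ℝ 1 (fun ξ => ϑ ξ t * q ξ t) :=
      (hϑ1.mul hq1).comp (contDiff_id.prodMk contDiff_const)
    have hPd : Continuous (deriv fun ξ => ϑ ξ t * q ξ t) := hP1.continuous_deriv (by norm_num)
    have hϑxc : Continuous fun ξ => deriv (fun ξ' => ϑ ξ' t) ξ :=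
      hϑx.continuous.comp (continuous_id.prodMk continuous_const)
    have hbdry : ∀ ξ ∈ Set.Icc (0:ℝ) 1, (∀ s, α ξ s = 0) → ϑ ξ t = 0 := by
      intro ξ hξ h0
      rw [← h1 ξ hξ t]
      simp [h0]
    have hFTC : ∫ ξ in (0:ℝ)..1, deriv (fun ξ => ϑ ξ t * q ξ t) ξ = 0 := by
      rw [integral_deriv_eq_sub (fun x _ => hP1.differentiable (by norm_num) x)
        (hPd.intervalIntegrable _ _)]
      rw [hbdry 0 (by simp) fun s => (hbc s).1, hbdry 1 (by simp) fun s => (hbc s).2]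
      simp
    have hpt : ∀ ξ ∈ Set.Ioo (0:ℝ) 1,
        deriv (fun s => k₂ * (deriv (fun ξ' => α ξ' s) ξ) ^ 2 + ρ * c * (ϑ ξ s) ^ 2) t
          = 2 * deriv (fun ξ => ϑ ξ t * q ξ t) ξ
            + -2 * k₃ * (deriv (fun ξ' => ϑ ξ' t) ξ) ^ 2 := by
      intro ξ hξ
      have hξ' := Set.Ioo_subset_Icc_self hξ
      have hmix : deriv (fun s => deriv (fun ξ' => α ξ' s) ξ) t = deriv (fun ξ' => ϑ ξ' t) ξ := by
        rw [deriv_mixed hα]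
        -- `∂_t α = ϑ` is only known on `[0, 1]`, a neighbourhood of the interior point `ξ`.
        refine Filter.EventuallyEq.deriv_eq ?_
        filter_upwards [Icc_mem_nhds hξ.1 hξ.2] with y hy using h1 y hy t
      have hA := (hasDerivAt_slice_right
        (hαx.differentiable (by norm_num)) ξ t).differentiableAt.hasDerivAt
      have hB := (hasDerivAt_slice_right
        (hϑ1.differentiable (by norm_num)) ξ t).differentiableAt.hasDerivAt
      have hX := (hasDerivAt_slice_left
        (hϑ1.differentiable (by norm_num)) ξ t).differentiableAt.hasDerivAt
      have hQ := (hasDerivAt_slice_left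
        (hq1.differentiable (by norm_num)) ξ t).differentiableAt.hasDerivAt
      have hL := ((hA.pow 2).const_mul k₂).add ((hB.pow 2).const_mul (ρ * c))
      have hR := hX.mul hQ
      have hheat : ρ * c * deriv (fun t' => ϑ ξ t') t = deriv (fun ξ' => q ξ' t) ξ := h2 ξ hξ' t
      refine hL.deriv.trans ?_
      rw [show deriv (fun ξ => ϑ ξ t * q ξ t) ξ = _ from hR.deriv, hmix, ← hheat]
      simp only [hq]
      push_cast
      ring
    have hcongr : ∫ ξ in (0:ℝ)..1,
        deriv (fun s => k₂ * (deriv (fun ξ' => α ξ' s) ξ) ^ 2 + ρ * c * (ϑ ξ s) ^ 2) t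
          = ∫ ξ in (0:ℝ)..1, (2 * deriv (fun ξ => ϑ ξ t * q ξ t) ξ
            + -2 * k₃ * (deriv (fun ξ' => ϑ ξ' t) ξ) ^ 2) := by
      exact integral_congr_Ioo_of_le zero_le_one hpt
    have hsq : Continuous fun ξ => -2 * k₃ * (deriv (fun ξ' => ϑ ξ' t) ξ) ^ 2 :=
      continuous_const.mul (hϑxc.pow 2)
    rw [hcongr, integral_add ((hPd.const_mul 2).intervalIntegrable _ _)
      (hsq.intervalIntegrable _ _), integral_const_mul, integral_const_mul,
      hFTC]
    ring
  refine ⟨hder, fun t => ?_, fun h0 t₁ t₂ => ?_⟩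
  · have : 0 ≤ ∫ ξ in (0:ℝ)..1, (deriv (fun ξ' => ϑ ξ' t) ξ) ^ 2 :=
      integral_nonneg zero_le_one fun ξ _ => sq_nonneg _
    nlinarith [mul_nonneg hk₃ this]
  · refine is_const_of_deriv_eq_zero (fun t => (hder t).differentiableAt) (fun t => ?_) t₁ t₂
    rw [(hder t).deriv, h0]
    simp
end
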